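/- There exist complex constants u and v, independent of z and τ, such that for all z ∈ ℂ and τ ∈ ℍ: F(z, τ+2) = u·F(z, τ) and e^{−28πiz²/τ}·F(z/τ, −1/τ) = v·F(z, τ); moreover u = e^{−2πi/3}. That is, the two-variable character of the Rudvalis enhanced vertex operator superalgebra spans a one-dimensional representation of the subgroup of the modular group generated by S : τ ↦ −1/τ and T² : τ ↦ τ+2. -/

import Mathlib

/-!
Everything rests on two classical facts available in Mathlib for `τ ∈ ℍ`: the functional equation
`θ(w/τ, -1/τ) = (-iτ)^{1/2} e^{πiw²/τ} θ(w, τ)` and the transformation `η(-1/τ) = (τ/i)^{1/2} η(τ)`.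

Write `F = (A + B + C + D) / (2η²⁸)`, where `A, B, C, D` are the 28th powers of theta at
`z`, `z + 1/2`, `z + τ/2`, `z + τ/2 + 1/2`, the last two with their exponential prefactor.
Taking `w = z`, `z + τ/2`, `z - 1/2`, `z + τ/2 - 1/2` in the 28th power of the functional equation
and completing squares, the inversion `S` fixes `A` and `D` and exchanges `B` with `C`, up to the
common factor `(-iτ)¹⁴ e^{28πiz²/τ}`. Since `η(-1/τ)²⁸ = (-iτ)¹⁴ η(τ)²⁸` as well, `v = 1`.
Under `τ ↦ τ + 2` each theta term is fixed, whereas `η(τ + 2)²⁸ = e^{14πi/3} η(τ)²⁸`, so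
`u = e^{-14πi/3} = e^{-2πi/3}`.
-/

open Complex

/-- The Jacobi theta function `θ(z,τ) = ∑_{m ∈ ℤ} e^{2πimz + πiτm²}`. -/
noncomputable def jacobiThetaFn (z τ : ℂ) : ℂ :=
  ∑' m : ℤ, Complex.exp (2 * (Real.pi : ℂ) * Complex.I * (m : ℂ) * z
    + (Real.pi : ℂ) * Complex.I * τ * (m : ℂ) ^ 2)

/-- The Dedekind eta function `η(τ) = e^{πiτ/12} ∏_{n=1}^∞ (1 - e^{2πinτ})`. -/
noncomputable def dedekindEtaFn (τ : ℂ) : ℂ :=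
  Complex.exp ((Real.pi : ℂ) * Complex.I * τ / 12) *
    ∏' n : ℕ, (1 - Complex.exp (2 * (Real.pi : ℂ) * Complex.I * ((n : ℂ) + 1) * τ))

/-- The two-variable character of the Rudvalis enhanced vertex operator superalgebra. -/
noncomputable def rudvalisCharacter (z τ : ℂ) : ℂ :=
  (jacobiThetaFn z τ ^ 28 + jacobiThetaFn (z + 1 / 2) τ ^ 28
    + Complex.exp (28 * (Real.pi : ℂ) * Complex.I * z + 7 * (Real.pi : ℂ) * Complex.I * τ)
        * jacobiThetaFn (z + τ / 2) τ ^ 28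
    + Complex.exp (28 * (Real.pi : ℂ) * Complex.I * z + 7 * (Real.pi : ℂ) * Complex.I * τ)
        * jacobiThetaFn (z + τ / 2 + 1 / 2) τ ^ 28)
    / (2 * dedekindEtaFn τ ^ 28)

lemma jacobiThetaFn_eq (z τ : ℂ) : jacobiThetaFn z τ = jacobiTheta₂ z τ := by
  refine tsum_congr fun n ↦ ?_
  rw [jacobiTheta₂_term]
  ring_nf

lemma dedekindEtaFn_eq (τ : ℂ) : dedekindEtaFn τ = ModularForm.eta τ := by
  unfold dedekindEtaFn ModularForm.eta
  simp_rw [ModularForm.eta_q_eq_cexp]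
  congr 2
  push_cast
  ring

lemma theta_add_one (z τ : ℂ) : jacobiThetaFn (z + 1) τ = jacobiThetaFn z τ := by
  simp only [jacobiThetaFn_eq, jacobiTheta₂_add_left]

lemma theta_add_two (z τ : ℂ) : jacobiThetaFn z (τ + 2) = jacobiThetaFn z τ := by
  simp only [jacobiThetaFn_eq, jacobiTheta₂_add_right]

/-- The 28th power of the functional equation of theta; the even exponent removes the branch of
the square root. -/
lemma theta_pow_inversion (w : ℂ) {τ : ℂ} (hτ : 0 < τ.im) :
    jacobiThetaFn (w / τ) (-1 / τ) ^ 28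
      = (-I * τ) ^ 14 * exp (28 * Real.pi * I * w ^ 2 / τ) * jacobiThetaFn w τ ^ 28 := by
  have hτ0 : τ ≠ 0 := by rintro rfl; simp at hτ
  have hroot : ((-I * τ) ^ (1 / 2 : ℂ)) ^ 28 = (-I * τ) ^ 14 := by
    rw [← cpow_nat_mul, ← cpow_natCast]
    norm_num
  have hexp : exp (28 * Real.pi * I * w ^ 2 / τ) * exp (-Real.pi * I * w ^ 2 / τ) ^ 28 = 1 := by
    rw [← exp_nat_mul, ← exp_add, ← exp_zero]
    congr 1
    push_cast
    ring
  have hne : -I * τ ≠ 0 := by simp [hτ0]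
  rw [jacobiThetaFn_eq, jacobiThetaFn_eq, jacobiTheta₂_functional_equation w τ]
  generalize -I * τ = s at hroot hne ⊢
  rw [mul_pow, mul_pow, div_pow, hroot, one_pow]
  generalize exp (28 * Real.pi * I * w ^ 2 / τ) = a at hexp ⊢
  generalize exp (-Real.pi * I * w ^ 2 / τ) ^ 28 = b at hexp ⊢
  generalize jacobiTheta₂ (w / τ) (-1 / τ) ^ 28 = t
  field_simp
  linear_combination (-t) * hexp

/-- `η(-1/τ)²⁸ = (-iτ)¹⁴ η(τ)²⁸`, the same automorphy factor as for `θ²⁸`. -/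
lemma eta_pow_inversion {τ : ℂ} (hτ : 0 < τ.im) :
    dedekindEtaFn (-1 / τ) ^ 28 = (-I * τ) ^ 14 * dedekindEtaFn τ ^ 28 := by
  have h : ModularForm.eta (-1 / τ) = (sqrt I)⁻¹ * (sqrt τ * ModularForm.eta τ) := by
    simpa using ModularForm.eta_comp_eq_csqrt_I_inv hτ
  have hs (w : ℂ) : sqrt w ^ 28 = w ^ 14 := by
    rw [sqrt, ← cpow_nat_mul, ← cpow_natCast]
    norm_num
  have hI : I ^ 14 = -1 := by
    rw [show (14 : ℕ) = 2 * 7 by norm_num, pow_mul, I_sq]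
    norm_num
  rw [dedekindEtaFn_eq, dedekindEtaFn_eq, h, mul_pow, mul_pow, inv_pow, hs, hs, mul_pow,
    neg_pow, hI]
  norm_num

lemma eta_pow_add_two (τ : ℂ) :
    dedekindEtaFn (τ + 2) ^ 28 = exp (14 * Real.pi * I / 3) * dedekindEtaFn τ ^ 28 := by
  have hprod (n : ℕ) : exp (2 * Real.pi * I * (n + 1) * (τ + 2))
      = exp (2 * Real.pi * I * (n + 1) * τ) := by
    rw [exp_eq_exp_iff_exists_int]
    exact ⟨2 * (n + 1), by push_cast; ring⟩
  unfold dedekindEtaFn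
  simp_rw [hprod]
  rw [mul_pow, mul_pow, ← mul_assoc, ← exp_nat_mul, ← exp_nat_mul, ← exp_add]
  congr 2
  push_cast
  ring

lemma rudvalisCharacter_add_two (z τ : ℂ) :
    rudvalisCharacter z (τ + 2) = exp (-2 * Real.pi * I / 3) * rudvalisCharacter z τ := by
  have hpre : exp (28 * Real.pi * I * z + 7 * Real.pi * I * (τ + 2))
      = exp (28 * Real.pi * I * z + 7 * Real.pi * I * τ) := by
    rw [exp_eq_exp_iff_exists_int]
    exact ⟨7, by push_cast; ring⟩
  have hu : exp (14 * Real.pi * I / 3) = (exp (-2 * Real.pi * I / 3))⁻¹ := by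
    rw [← exp_neg, exp_eq_exp_iff_exists_int]
    exact ⟨2, by push_cast; ring⟩
  unfold rudvalisCharacter
  rw [eta_pow_add_two, hpre, hu, theta_add_two, theta_add_two, theta_add_two, theta_add_two,
    show z + (τ + 2) / 2 = z + τ / 2 + 1 by ring,
    show z + τ / 2 + 1 + 1 / 2 = z + τ / 2 + 1 / 2 + 1 by ring, theta_add_one, theta_add_one]
  simp only [div_eq_mul_inv, mul_inv, inv_inv]
  ring

lemma rudvalisCharacter_inversion (z : ℂ) {τ : ℂ} (hτ : 0 < τ.im) :
    exp (-28 * Real.pi * I * z ^ 2 / τ) * rudvalisCharacter (z / τ) (-1 / τ)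
      = rudvalisCharacter z τ := by
  have hτ0 : τ ≠ 0 := by rintro rfl; simp at hτ
  have hη : dedekindEtaFn τ ^ 28 ≠ 0 := by
    rw [dedekindEtaFn_eq]
    exact pow_ne_zero _ (ModularForm.eta_ne_zero hτ)
  have hA : exp (-28 * Real.pi * I * z ^ 2 / τ) * exp (28 * Real.pi * I * z ^ 2 / τ) = 1 := by
    rw [← exp_add, ← exp_zero]
    congr 1
    ring
  have hB : exp (-28 * Real.pi * I * z ^ 2 / τ) * exp (28 * Real.pi * I * (z + τ / 2) ^ 2 / τ)
      = exp (28 * Real.pi * I * z + 7 * Real.pi * I * τ) := by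
    rw [← exp_add]
    congr 1
    field_simp
    ring
  have hC : exp (-28 * Real.pi * I * z ^ 2 / τ) *
      (exp (28 * Real.pi * I * (z / τ) + 7 * Real.pi * I * (-1 / τ)) *
        exp (28 * Real.pi * I * (z - 1 / 2) ^ 2 / τ)) = 1 := by
    rw [← exp_add, ← exp_add]
    convert exp_zero using 2
    field_simp
    ring
  have hD : exp (-28 * Real.pi * I * z ^ 2 / τ) *
      (exp (28 * Real.pi * I * (z / τ) + 7 * Real.pi * I * (-1 / τ)) *
        exp (28 * Real.pi * I * (z + τ / 2 - 1 / 2) ^ 2 / τ))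
      = exp (28 * Real.pi * I * z + 7 * Real.pi * I * τ) := by
    rw [← exp_add, ← exp_add, exp_eq_exp_iff_exists_int]
    -- the cross term `2 · (τ/2) · (-1/2)` contributes `-14πi`
    refine ⟨-7, ?_⟩
    push_cast
    field_simp
    ring
  have tB : jacobiThetaFn (z / τ + 1 / 2) (-1 / τ)
      = jacobiThetaFn ((z + τ / 2) / τ) (-1 / τ) := by
    congr 1
    field_simp
  have tC : jacobiThetaFn (z / τ + -1 / τ / 2) (-1 / τ)
      = jacobiThetaFn ((z - 1 / 2) / τ) (-1 / τ) := by
    congr 1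
    field_simp
    ring
  have tD : jacobiThetaFn (z / τ + -1 / τ / 2 + 1 / 2) (-1 / τ)
      = jacobiThetaFn ((z + τ / 2 - 1 / 2) / τ) (-1 / τ) := by
    congr 1
    field_simp
    ring
  have sC : jacobiThetaFn (z - 1 / 2) τ = jacobiThetaFn (z + 1 / 2) τ := by
    rw [← theta_add_one]
    congr 1
    ring
  have sD : jacobiThetaFn (z + τ / 2 - 1 / 2) τ = jacobiThetaFn (z + τ / 2 + 1 / 2) τ := by
    rw [← theta_add_one]
    congr 1
    ring
  unfold rudvalisCharacter
  rw [tB, tC, tD, theta_pow_inversion _ hτ, theta_pow_inversion _ hτ, theta_pow_inversion _ hτ,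
    theta_pow_inversion _ hτ, eta_pow_inversion hτ, sC, sD, ← mul_div_assoc,
    div_eq_div_iff (by simp [hη, hτ0]) (by simp [hη])]
  linear_combination (2 * dedekindEtaFn τ ^ 28 * (-I * τ) ^ 14) *
    (jacobiThetaFn z τ ^ 28 * hA + jacobiThetaFn (z + τ / 2) τ ^ 28 * hB
      + jacobiThetaFn (z + 1 / 2) τ ^ 28 * hC + jacobiThetaFn (z + τ / 2 + 1 / 2) τ ^ 28 * hD)

/-- The two-variable character `F` of the Rudvalis enhanced VOSA spans a one-dimensional
representation of the subgroup of the modular group generated by `S : τ ↦ -1/τ` and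
`T² : τ ↦ τ + 2`: there are constants `u, v ∈ ℂ` with `F(z, τ+2) = u F(z,τ)`,
`e^{-28πiz²/τ} F(z/τ, -1/τ) = v F(z,τ)`, and `u = e^{-2πi/3}`. -/
theorem rudvalis_character_modular_invariance :
    ∃ u v : ℂ,
      (∀ (z τ : ℂ), 0 < τ.im → rudvalisCharacter z (τ + 2) = u * rudvalisCharacter z τ) ∧
      (∀ (z τ : ℂ), 0 < τ.im →
        Complex.exp (-28 * (Real.pi : ℂ) * Complex.I * z ^ 2 / τ)
            * rudvalisCharacter (z / τ) (-1 / τ)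
          = v * rudvalisCharacter z τ) ∧
      u = Complex.exp (-2 * (Real.pi : ℂ) * Complex.I / 3) := by
  exact ⟨_, 1, fun z τ _ ↦ rudvalisCharacter_add_two z τ,
    fun z τ hτ ↦ by rw [one_mul, rudvalisCharacter_inversion z hτ], rfl⟩
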